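/- arXiv:1604.02190 — 7 statements merged into one kernel-verified Lean document; each statement's English description precedes it below -/
import Mathlib

section
/- For every integer k ≥ 1 and every α ∈ ℤ, one has k! · τ_k^{(α)} = Σ_m V.coeff(m) · ∏_{i=0}^{k−1} c_{α+m(i)}, where V ∈ ℂ[w_0,…,w_{k−1}] is the squared Vandermonde polynomial V = ∏_{0≤i<j≤k−1}(w_i − w_j)², m ranges over the (finite) support of V (monomial exponent vectors m : Fin k → ℕ), and V.coeff(m) is the coefficient of the monomial ∏_i w_i^{m(i)} in V. -/
/-- Hankel determinant tau-function: `τ_k^{(α)} = det (c_{α+i+j})_{0 ≤ i,j ≤ k-1}`,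
with `τ_0^{(α)} = 1` (empty determinant) and `τ_k^{(α)} = 0` for `k < 0`. -/
noncomputable def tau (c : ℤ → ℂ) (k α : ℤ) : ℂ :=
  if k < 0 then 0
  else Matrix.det (Matrix.of fun i j : Fin k.toNat => c (α + (i : ℕ) + (j : ℕ)))

/-- The squared Vandermonde polynomial `V = ∏_{0 ≤ i < j ≤ k-1} (w_i - w_j)^2`. -/
noncomputable def vandermondeSq (k : ℕ) : MvPolynomial (Fin k) ℂ :=
  ∏ p ∈ (Finset.univ : Finset (Fin k × Fin k)).filter (fun p => p.1 < p.2),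
    (MvPolynomial.X p.1 - MvPolynomial.X p.2) ^ 2

/-!
Apply the linear functional `w^m ↦ ∏ i, c (m i)` to the square of the Vandermonde determinant,
expanded as a double sum over permutations `σ`, `ρ`. For fixed `σ`, the sum over `ρ` is the Leibniz
expansion of the Hankel determinant with rows permuted by `σ`; the factor `sign σ` undoes this
permutation, so each `σ` contributes one copy of the Hankel determinant.
-/

open Matrix MvPolynomial Equiv.Perm
open scoped Nat

section Determinant

variable {ι R : Type*} [Fintype ι] [DecidableEq ι] [CommRing R]

theorem sum_sign_mul_sign_mul_prod_eq_det (M : Matrix ι ι R) (σ : Equiv.Perm ι) :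
    ∑ ρ : Equiv.Perm ι, ((sign σ : ℤ) : R) * ((sign ρ : ℤ) : R) * ∏ i, M (σ i) (ρ i) = M.det := by
  have sign_mul_self : ((sign σ : ℤ) : R) * ((sign σ : ℤ) : R) = 1 := by
    rw [← Int.cast_mul, Int.units_coe_mul_self, Int.cast_one]
  calc
    _ = ((sign σ : ℤ) : R) * (M.submatrix σ id).det := by
      rw [← det_transpose, det_apply', Finset.mul_sum]
      simp only [transpose_apply, submatrix_apply, id_eq, mul_assoc]
    _ = M.det := by rw [det_permute, ← mul_assoc, sign_mul_self, one_mul]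

theorem sum_sum_sign_mul_sign_mul_prod_eq_factorial_mul_det (M : Matrix ι ι R) :
    ∑ σ : Equiv.Perm ι, ∑ ρ : Equiv.Perm ι,
      ((sign σ : ℤ) : R) * ((sign ρ : ℤ) : R) * ∏ i, M (σ i) (ρ i) =
      ((Fintype.card ι)! : R) * M.det := by
  simp only [sum_sign_mul_sign_mul_prod_eq_det, Finset.sum_const, Finset.card_univ,
    Fintype.card_perm, nsmul_eq_mul]

theorem det_vandermonde_sq_eq_sum_sum {n : ℕ} (v : Fin n → R) :
    (vandermonde v).det ^ 2 = ∑ σ : Equiv.Perm (Fin n), ∑ ρ : Equiv.Perm (Fin n),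
      ((sign σ : ℤ) : R) * ((sign ρ : ℤ) : R) * ∏ i, v i ^ ((σ i : ℕ) + (ρ i : ℕ)) := by
  rw [← det_transpose, det_apply', sq, Finset.sum_mul_sum]
  simp only [transpose_apply, vandermonde_apply, pow_add, Finset.prod_mul_distrib,
    mul_mul_mul_comm]

theorem prod_lt_sub_sq_eq_det_vandermonde_sq {n : ℕ} (v : Fin n → R) :
    ∏ p : Fin n × Fin n with p.1 < p.2, (v p.1 - v p.2) ^ 2 = (vandermonde v).det ^ 2 := by
  rw [det_vandermonde, Finset.prod_filter, Fintype.prod_prod_type, ← Finset.prod_pow]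
  refine Finset.prod_congr rfl fun i _ => ?_
  rw [← Finset.prod_pow, ← Finset.prod_filter, Finset.filter_lt_eq_Ioi]
  exact Finset.prod_congr rfl fun j _ => sub_sq_comm (v i) (v j)

end Determinant

section MomentFunctional

variable {ι R : Type*} [Fintype ι] [CommSemiring R]

/-- The linear functional on polynomials with `w^m ↦ ∏ i, c (m i)`: the tensor power, indexed by the
variables, of the functional with moments `c` on polynomials in one variable. -/
noncomputable def momentFunctional (c : ℕ → R) : MvPolynomial ι R →ₗ[R] R :=
  (basisMonomials ι R).constr R fun m => ∏ i, c (m i)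

theorem momentFunctional_apply (c : ℕ → R) (p : MvPolynomial ι R) :
    momentFunctional c p = ∑ m ∈ p.support, p.coeff m * ∏ i, c (m i) :=
  (basisMonomials ι R).constr_apply R _ p

theorem momentFunctional_monomial_one (c : ℕ → R) (m : ι →₀ ℕ) :
    momentFunctional c (monomial m 1) = ∏ i, c (m i) :=
  (basisMonomials ι R).constr_basis R _ m

theorem momentFunctional_prod_X_pow (c : ℕ → R) (e : ι → ℕ) :
    momentFunctional c (∏ i, X i ^ e i) = ∏ i, c (e i) := by
  classical simp [prod_X_pow, momentFunctional_monomial_one]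

end MomentFunctional

/-- The `n × n` Hankel matrix of a sequence, with entries `c (i + j)`. -/
def hankelMatrix {R : Type*} (c : ℕ → R) (n : ℕ) : Matrix (Fin n) (Fin n) R :=
  of fun i j => c (i + j)

theorem momentFunctional_det_vandermonde_X_sq {R : Type*} [CommRing R] (c : ℕ → R) (n : ℕ) :
    momentFunctional c ((vandermonde (X : Fin n → MvPolynomial (Fin n) R)).det ^ 2) =
      (n ! : R) * (hankelMatrix c n).det := by
  have map_intCast_mul (a b : ℤ) (p : MvPolynomial (Fin n) R) :
      momentFunctional c ((a : MvPolynomial (Fin n) R) * (b : MvPolynomial (Fin n) R) * p) =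
        (a : R) * (b : R) * momentFunctional c p := by
    rw [← Int.cast_mul, ← Int.cast_mul, ← zsmul_eq_mul, ← zsmul_eq_mul, map_zsmul]
  simp only [det_vandermonde_sq_eq_sum_sum, map_sum, map_intCast_mul, momentFunctional_prod_X_pow]
  simpa only [Fintype.card_fin, hankelMatrix, of_apply] using
    sum_sum_sign_mul_sign_mul_prod_eq_factorial_mul_det (hankelMatrix c n)

theorem residue_formula_tau_general {R : Type*} [CommRing R] (c : ℕ → R) (n : ℕ) :
    (n ! : R) * (hankelMatrix c n).det =
      ∑ m ∈ ((vandermonde (X : Fin n → MvPolynomial (Fin n) R)).det ^ 2).support,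
        ((vandermonde X).det ^ 2).coeff m * ∏ i, c (m i) := by
  rw [← momentFunctional_det_vandermonde_X_sq, momentFunctional_apply]

theorem vandermondeSq_eq_det_vandermonde_sq (k : ℕ) :
    vandermondeSq k = (vandermonde (X : Fin k → MvPolynomial (Fin k) ℂ)).det ^ 2 :=
  prod_lt_sub_sq_eq_det_vandermonde_sq X

theorem tau_natCast (c : ℤ → ℂ) (k : ℕ) (α : ℤ) :
    tau c k α = (hankelMatrix (fun n => c (α + n)) k).det := by
  rw [tau, if_neg (Int.natCast_nonneg k).not_gt]
  simp only [hankelMatrix, Nat.cast_add, ← add_assoc]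
  -- `(k : ℤ).toNat` reduces to `k`, so the two determinants have the same index type.
  rfl

theorem residue_formula_tau (c : ℤ → ℂ) (k : ℕ) (hk : 1 ≤ k) (α : ℤ) :
    (k.factorial : ℂ) * tau c k α =
      ∑ m ∈ (vandermondeSq k).support,
        (vandermondeSq k).coeff m * ∏ i : Fin k, c (α + (m i : ℤ)) := by
  rw [tau_natCast, vandermondeSq_eq_det_vandermonde_sq, residue_formula_tau_general]
end

section
/- For every integer k ≥ 1 and every α ∈ ℤ, the polynomial identity k! · P_k^{(α)}(z) = Σ_m q_m(z) · ∏_{i=0}^{k−1} c_{α+m(i)} holds in ℂ[z], where q_m(z) ∈ ℂ[z] is the coefficient of the monomial ∏_i w_i^{m(i)} in the polynomial ∏_{0≤i<j≤k−1}(w_i − w_j)² · ∏_{i=0}^{k−1}(z − w_i) (regarded as a polynomial in w_0,…,w_{k−1} with coefficients in ℂ[z]), and the sum ranges over all exponent vectors m : Fin k → ℕ with q_m ≠ 0. -/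
/-- The determinantal polynomial `P_k^{(α)}(z)`: determinant of the `(k+1) × (k+1)` matrix
whose `(i,j)` entry is `c_{α+i+j}` for `0 ≤ j ≤ k-1` and `z^i` for `j = k`. -/
noncomputable def Pdet (c : ℤ → ℂ) (k : ℕ) (α : ℤ) : Polynomial ℂ :=
  Matrix.det (Matrix.of fun i j : Fin (k + 1) =>
    if (j : ℕ) < k then Polynomial.C (c (α + (i : ℕ) + (j : ℕ))) else Polynomial.X ^ (i : ℕ))

/-- The polynomial `∏_{0 ≤ i < j ≤ k-1}(w_i - w_j)^2 ⬝ ∏_{i=0}^{k-1}(z - w_i)`, regarded as a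
polynomial in `w_0, …, w_{k-1}` with coefficients in `ℂ[z]`. -/
noncomputable def vandermondeSqShift (k : ℕ) : MvPolynomial (Fin k) (Polynomial ℂ) :=
  (∏ p ∈ (Finset.univ : Finset (Fin k × Fin k)).filter (fun p => p.1 < p.2),
      (MvPolynomial.X p.1 - MvPolynomial.X p.2) ^ 2) *
    ∏ i : Fin k, (MvPolynomial.C Polynomial.X - MvPolynomial.X i)

/-!
The functional `w^m ↦ ∏_i μ (m i)` is applied to `∏_{i<j} (w_i - w_j)² ∏_i (z - w_i)`, which is the
product of the Vandermonde determinants in `w` and in `(w, z)`. Expanding the first one gives the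
sum over permutations `σ` of `sign σ ∏_j w_j^{σ j}` times the second one. Each `w_j` occurs in a
single column of the latter, so the monomial can be absorbed into the columns and the functional
acts column by column: the result is the Hankel determinant bordered by powers of `z`, with its
other columns permuted by `σ`. The two signs cancel, so each of the `k!` permutations contributes
the same term. This is Heine's argument for orthogonal polynomials.
-/

section BorderedDeterminant

open Finset Matrix

variable {m : Type*} {n : ℕ} {R : Type*}

/-- The matrix obtained from `M` by adjoining the column `b` after its last column; with a square
result, its determinant is a bordered determinant. -/
def snocCol (M : Matrix m (Fin n) R) (b : m → R) : Matrix m (Fin (n + 1)) R :=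
  of fun i => Fin.snoc (α := fun _ => R) (M i) (b i)

@[simp]
lemma snocCol_castSucc (M : Matrix m (Fin n) R) (b : m → R) (i : m) (j : Fin n) :
    snocCol M b i j.castSucc = M i j := by
  simp [snocCol]

@[simp]
lemma snocCol_last (M : Matrix m (Fin n) R) (b : m → R) (i : m) :
    snocCol M b i (Fin.last n) = b i := by
  simp [snocCol]

lemma snocCol_submatrix_perm (M : Matrix m (Fin n) R) (b : m → R) (σ : Equiv.Perm (Fin n)) :
    snocCol (M.submatrix id σ) b =
      (snocCol M b).submatrix id (σ.viaFintypeEmbedding Fin.castSuccEmb) := by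
  ext i j
  cases j using Fin.lastCases with
  | last =>
    rw [submatrix_apply, Equiv.Perm.viaFintypeEmbedding_apply_notMem_range _ _ (by simp)]
    simp
  | cast j =>
    rw [submatrix_apply, ← Fin.coe_castSuccEmb, Equiv.Perm.viaFintypeEmbedding_apply_image]
    simp

variable [CommRing R]

lemma det_snocCol_submatrix_perm (M : Matrix (Fin (n + 1)) (Fin n) R) (b : Fin (n + 1) → R)
    (σ : Equiv.Perm (Fin n)) :
    (snocCol (M.submatrix id σ) b).det = Equiv.Perm.sign σ * (snocCol M b).det := by
  rw [snocCol_submatrix_perm, det_permute', Equiv.Perm.viaFintypeEmbedding_sign]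

lemma det_snocCol_eq_sum_perm (M : Matrix (Fin (n + 1)) (Fin n) R) (b : Fin (n + 1) → R) :
    (snocCol M b).det = ∑ τ : Equiv.Perm (Fin (n + 1)),
      Equiv.Perm.sign τ * b (τ (Fin.last n)) * ∏ j, M (τ j.castSucc) j := by
  simp only [det_apply', Fin.prod_univ_castSucc, snocCol_castSucc, snocCol_last, mul_assoc,
    mul_comm (b _)]

lemma vandermonde_snoc_transpose (v : Fin n → R) (z : R) :
    (vandermonde (Fin.snoc v z : Fin (n + 1) → R))ᵀ =
      snocCol (of fun (i : Fin (n + 1)) j => v j ^ (i : ℕ)) fun i => z ^ (i : ℕ) := by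
  ext i j
  cases j using Fin.lastCases <;> simp

lemma det_vandermonde_eq_prod_Iio (v : Fin n → R) :
    (vandermonde v).det = ∏ j, ∏ i ∈ Iio j, (v j - v i) := by
  rw [det_vandermonde]
  exact prod_comm' (by simp)

lemma det_vandermonde_snoc (v : Fin n → R) (z : R) :
    (vandermonde (Fin.snoc v z : Fin (n + 1) → R)).det =
      (vandermonde v).det * ∏ i, (z - v i) := by
  simp only [det_vandermonde_eq_prod_Iio, Fin.prod_univ_castSucc, Fin.prod_Iio_castSucc,
    Fin.Iio_last_eq_map, prod_map, Fin.coe_castSuccEmb, Fin.snoc_castSucc, Fin.snoc_last]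

lemma det_vandermonde_sq (v : Fin n → R) :
    (vandermonde v).det ^ 2 = ∏ p : Fin n × Fin n with p.1 < p.2, (v p.1 - v p.2) ^ 2 := by
  simp only [det_vandermonde, ← prod_pow, ← filter_lt_eq_Ioi, prod_filter,
    Fintype.prod_prod_type, ite_pow, one_pow]
  exact prod_congr rfl fun i _ => prod_congr rfl fun j _ => by rw [sub_sq_comm]

end BorderedDeterminant

section ProductMoment

open Finset Matrix MvPolynomial

variable {ι A : Type*} [Fintype ι] [CommSemiring A]

/-- The linear functional `w^m ↦ ∏ i, μ (m i)` on polynomials in `w_i`, `i : ι`: integration against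
the product of copies of a formal measure on the line with moments `μ`. -/
noncomputable def productMoment (μ : ℕ → A) : MvPolynomial ι A →ₗ[A] A :=
  (basisMonomials ι A).constr A fun m => ∏ i, μ (m i)

lemma productMoment_apply (μ : ℕ → A) (p : MvPolynomial ι A) :
    productMoment μ p = ∑ m ∈ p.support, p.coeff m * ∏ i, μ (m i) :=
  Module.Basis.constr_apply ..

lemma productMoment_prod_X_pow (μ : ℕ → A) (e : ι → ℕ) :
    productMoment μ (∏ i, X i ^ e i) = ∏ i, μ (e i) := by
  have basis_eq : basisMonomials ι A (Finsupp.equivFunOnFinite.symm e) = ∏ i, X i ^ e i := by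
    simp [monomial_eq, Finsupp.prod_fintype]
  rw [← basis_eq, productMoment, Module.Basis.constr_basis]
  rfl

end ProductMoment

section HeineFormula

open Finset Matrix MvPolynomial

variable {A : Type*} [CommRing A] {k : ℕ}

lemma productMoment_prod_X_pow_mul_det (μ : ℕ → A) (d : Fin k → ℕ) (e : Fin (k + 1) → ℕ)
    (b : Fin (k + 1) → A) :
    productMoment μ
        ((∏ j, X j ^ d j) * (snocCol (of fun i j => X j ^ e i) fun i => C (b i)).det) =
      (snocCol (of fun i j => μ (d j + e i)) b).det := by
  simp only [det_snocCol_eq_sum_perm, mul_sum, map_sum, of_apply]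
  refine sum_congr rfl fun τ _ => ?_
  have summand : (∏ j, X j ^ d j : MvPolynomial (Fin k) A) *
        (((Equiv.Perm.sign τ : ℤ) : MvPolynomial (Fin k) A) * C (b (τ (Fin.last k))) *
          ∏ j : Fin k, X j ^ e (τ j.castSucc)) =
      (((Equiv.Perm.sign τ : ℤ) : A) * b (τ (Fin.last k))) •
        ∏ j : Fin k, X j ^ (d j + e (τ j.castSucc)) := by
    simp only [pow_add, prod_mul_distrib, smul_eq_C_mul, map_mul, map_intCast]
    ring
  rw [summand, map_smul, productMoment_prod_X_pow, smul_eq_mul]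

lemma productMoment_det_mul_det (μ : ℕ → A) (d : Fin k → ℕ) (e : Fin (k + 1) → ℕ)
    (b : Fin (k + 1) → A) :
    productMoment μ ((of fun i j => X j ^ d i).det *
        (snocCol (of fun i j => X j ^ e i) fun i => C (b i)).det) =
      k.factorial * (snocCol (of fun i j => μ (d j + e i)) b).det := by
  set D := (snocCol (of fun i j => X j ^ e i) fun i => C (b i)).det
  set H := (snocCol (of fun i j => μ (d j + e i)) b).det
  have moment_perm (σ : Equiv.Perm (Fin k)) :
      productMoment μ ((∏ j, X j ^ d (σ j)) * D) = Equiv.Perm.sign σ * H :=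
    (productMoment_prod_X_pow_mul_det μ (d ∘ σ) e b).trans
      (det_snocCol_submatrix_perm (of fun i j => μ (d j + e i)) b σ)
  calc productMoment μ ((of fun i j => X j ^ d i).det * D)
      = ∑ σ : Equiv.Perm (Fin k),
          Equiv.Perm.sign σ • productMoment μ ((∏ j, X j ^ d (σ j)) * D) := by
        simp only [det_apply, of_apply, sum_mul, map_sum, smul_mul_assoc, Units.smul_def, map_zsmul]
    _ = ∑ _σ : Equiv.Perm (Fin k), H := by
        refine sum_congr rfl fun σ _ => ?_
        rw [moment_perm, Units.smul_def, zsmul_eq_mul, ← mul_assoc, ← Int.cast_mul,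
          Int.units_coe_mul_self, Int.cast_one, one_mul]
    _ = k.factorial * H := by
        simp [Fintype.card_perm]

/-- The weight `∏_{i < j} (w_i - w_j)² ∏_i (z - w_i)` of Heine's formula for orthogonal
polynomials, evaluated at an arbitrary element `z` of the coefficient ring. -/
noncomputable def heineWeight (k : ℕ) (z : A) : MvPolynomial (Fin k) A :=
  (∏ p : Fin k × Fin k with p.1 < p.2, (X p.1 - X p.2) ^ 2) * ∏ i, (C z - X i)

lemma heineWeight_eq_det_mul_det (k : ℕ) (z : A) :
    heineWeight k z = (of fun i j : Fin k => X j ^ (i : ℕ)).det *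
      (snocCol (of fun (i : Fin (k + 1)) j => X j ^ (i : ℕ)) fun i => C (z ^ (i : ℕ))).det := by
  have det_transpose_vandermonde :
      (of fun i j : Fin k => (X j : MvPolynomial (Fin k) A) ^ (i : ℕ)).det =
        (vandermonde X).det :=
    det_transpose (vandermonde X)
  simp only [map_pow]
  rw [det_transpose_vandermonde, ← vandermonde_snoc_transpose, det_transpose,
    det_vandermonde_snoc, ← mul_assoc, ← sq, det_vandermonde_sq, heineWeight]

theorem residue_formula_P_general (μ : ℕ → A) (k : ℕ) (z : A) :
    k.factorial * (snocCol (of fun (i : Fin (k + 1)) (j : Fin k) => μ (i + j))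
        fun i => z ^ (i : ℕ)).det =
      ∑ m ∈ (heineWeight k z).support, (heineWeight k z).coeff m * ∏ i, μ (m i) := by
  rw [← productMoment_apply, heineWeight_eq_det_mul_det, productMoment_det_mul_det]
  simp only [add_comm]

end HeineFormula

lemma Pdet_eq_det_snocCol (c : ℤ → ℂ) (k : ℕ) (α : ℤ) :
    Pdet c k α = (snocCol (Matrix.of fun (i : Fin (k + 1)) (j : Fin k) =>
      Polynomial.C (c (α + (i + j : ℕ)))) fun i => Polynomial.X ^ (i : ℕ)).det := by
  refine congrArg Matrix.det (Matrix.ext fun i j => ?_)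
  cases j using Fin.lastCases <;> simp [add_assoc]

lemma vandermondeSqShift_eq_heineWeight (k : ℕ) :
    vandermondeSqShift k = heineWeight k Polynomial.X :=
  rfl

theorem residue_formula_P (c : ℤ → ℂ) (k : ℕ) (hk : 1 ≤ k) (α : ℤ) :
    Polynomial.C (k.factorial : ℂ) * Pdet c k α =
      ∑ m ∈ (vandermondeSqShift k).support,
        (vandermondeSqShift k).coeff m * Polynomial.C (∏ i : Fin k, c (α + (m i : ℤ))) := by
  simpa only [Pdet_eq_det_snocCol, map_natCast, map_prod, vandermondeSqShift_eq_heineWeight] using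
    residue_formula_P_general (fun n => Polynomial.C (c (α + n))) k Polynomial.X
end

section
/- For every integer k ≥ 1 and every α ∈ ℤ, the Hankel determinants satisfy the zero-curvature identity (τ_k^{(α)})² · (τ_{k+2}^{(α−1)} τ_k^{(α+1)} − τ_{k+1}^{(α−1)} τ_{k+1}^{(α+1)}) = (τ_{k+1}^{(α)})² · (τ_{k+1}^{(α−1)} τ_{k−1}^{(α+1)} − τ_k^{(α−1)} τ_k^{(α+1)}). -/
/-!
Removing the first or last row, and the first or last column, from the `(k + 1) × (k + 1)` Hankel
matrix with shift `α - 1` leaves `k × k` Hankel matrices with shifts `α - 1`, `α`, `α` and `α + 1`.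
The Desnanot–Jacobi identity therefore gives the bilinear relation
`τ_{k+1}^{(α-1)} τ_{k-1}^{(α+1)} = τ_k^{(α-1)} τ_k^{(α+1)} - (τ_k^{(α)})²`.
By this relation at `k + 1` and at `k`, both sides of the zero-curvature identity equal
`-(τ_k^{(α)})² (τ_{k+1}^{(α)})²`.
-/

open Matrix

section ComplementaryMinor

variable {R m n : Type*} [CommRing R] [Fintype m] [DecidableEq m] [Fintype n] [DecidableEq n]

theorem mul_fromBlocks_one_adjugate (M : Matrix (m ⊕ n) (m ⊕ n) R) :
    M * fromBlocks 1 M.adjugate.toBlocks₁₂ 0 M.adjugate.toBlocks₂₂ =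
      fromBlocks M.toBlocks₁₁ 0 M.toBlocks₂₁ (M.det • 1) := by
  have h := M.mul_adjugate
  rw [← fromBlocks_toBlocks M.adjugate] at h
  nth_rw 1 [← fromBlocks_toBlocks M] at h
  rw [fromBlocks_multiply, ← fromBlocks_one, fromBlocks_smul, fromBlocks_inj] at h
  obtain ⟨-, h₁₂, -, h₂₂⟩ := h
  nth_rw 1 [← fromBlocks_toBlocks M]
  rw [fromBlocks_multiply, h₁₂, h₂₂]
  simp

theorem det_mul_det_toBlocks₂₂_adjugate (M : Matrix (m ⊕ n) (m ⊕ n) R) :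
    M.det * M.adjugate.toBlocks₂₂.det = M.det ^ Fintype.card n * M.toBlocks₁₁.det := by
  have h := congrArg det (mul_fromBlocks_one_adjugate M)
  rw [det_mul, det_fromBlocks_zero₂₁, det_fromBlocks_zero₁₂, det_smul] at h
  simpa [mul_comm] using h

theorem det_toBlocks₂₂_adjugate [Nonempty n] (M : Matrix (m ⊕ n) (m ⊕ n) R) :
    M.adjugate.toBlocks₂₂.det = M.det ^ (Fintype.card n - 1) * M.toBlocks₁₁.det := by
  -- The determinant of the generic matrix can be cancelled, and every matrix specializes it.
  let X := mvPolynomialX (m ⊕ n) (m ⊕ n) ℤ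
  have generic : X.adjugate.toBlocks₂₂.det = X.det ^ (Fintype.card n - 1) * X.toBlocks₁₁.det := by
    refine mul_left_cancel₀ (det_mvPolynomialX_ne_zero (m ⊕ n) ℤ) ?_
    rw [det_mul_det_toBlocks₂₂_adjugate, ← mul_assoc, ← pow_succ',
      Nat.sub_add_cancel Fintype.card_pos]
  let φ := MvPolynomial.aeval (R := ℤ) fun p : (m ⊕ n) × (m ⊕ n) => M p.1 p.2
  have hX : φ.mapMatrix X = M := mvPolynomialX_mapMatrix_aeval ℤ M
  have h := congrArg φ generic
  rw [map_mul, map_pow, AlgHom.map_det, AlgHom.map_det, AlgHom.map_det, hX] at h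
  have h₁₁ : φ.mapMatrix X.toBlocks₁₁ = M.toBlocks₁₁ := congrArg toBlocks₁₁ hX
  have h₂₂ : φ.mapMatrix X.adjugate.toBlocks₂₂ = M.adjugate.toBlocks₂₂ :=
    congrArg toBlocks₂₂ ((φ.map_adjugate X).trans (congrArg adjugate hX))
  rwa [h₁₁, h₂₂] at h

end ComplementaryMinor

section DesnanotJacobi

/-- The reindexing of the rows and columns of an `(n + 2) × (n + 2)` matrix that splits the inner
indices `1, …, n` from the two outer ones. The rotation puts the outer indices in the order
`n + 1, 0`. -/
def innerSumOuterEquiv (n : ℕ) : Fin n ⊕ Fin 2 ≃ Fin (n + 2) :=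
  finSumFinEquiv.trans (finRotate (n + 2))

theorem innerSumOuterEquiv_inl {n : ℕ} (i : Fin n) :
    innerSumOuterEquiv n (Sum.inl i) = i.succ.castSucc :=
  finRotate_of_lt (by simp)

theorem innerSumOuterEquiv_inr_zero (n : ℕ) :
    innerSumOuterEquiv n (Sum.inr 0) = Fin.last (n + 1) :=
  finRotate_of_lt (by simp)

theorem innerSumOuterEquiv_inr_one (n : ℕ) : innerSumOuterEquiv n (Sum.inr 1) = 0 :=
  finRotate_last

variable {R : Type*} [CommRing R]

theorem desnanot_jacobi {n : ℕ} (M : Matrix (Fin (n + 2)) (Fin (n + 2)) R) :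
    M.det * (M.submatrix (fun i : Fin n => i.succ.castSucc) (fun i => i.succ.castSucc)).det =
      (M.submatrix Fin.succ Fin.succ).det * (M.submatrix Fin.castSucc Fin.castSucc).det -
        (M.submatrix Fin.succ Fin.castSucc).det * (M.submatrix Fin.castSucc Fin.succ).det := by
  let e := innerSumOuterEquiv n
  have jacobi := det_toBlocks₂₂_adjugate (M.submatrix e e)
  have inner : (M.submatrix e e).toBlocks₁₁ =
      M.submatrix (fun i : Fin n => i.succ.castSucc) (fun i => i.succ.castSucc) := by
    ext i j
    simp [e, toBlocks₁₁, innerSumOuterEquiv_inl]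
  rw [inner, det_submatrix_equiv_self, adjugate_submatrix_equiv_self, det_fin_two,
    Fintype.card_fin, pow_one] at jacobi
  rw [← jacobi]
  simp only [e, toBlocks₂₂, of_apply, submatrix_apply, innerSumOuterEquiv_inr_zero,
    innerSumOuterEquiv_inr_one, adjugate_fin_succ_eq_det_submatrix, Fin.succAbove_zero,
    Fin.succAbove_last, Fin.val_zero, Fin.val_last]
  have sign : (-1 : R) ^ (n + 1) * (-1) ^ (n + 1) = 1 := by
    rw [← mul_pow, neg_one_mul, neg_neg, one_pow]
  linear_combination
    ((M.submatrix Fin.succ Fin.succ).det * (M.submatrix Fin.castSucc Fin.castSucc).det -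
      (M.submatrix Fin.succ Fin.castSucc).det * (M.submatrix Fin.castSucc Fin.succ).det) * sign

end DesnanotJacobi

section HankelDet

variable {R : Type*} [CommRing R]

/-- The Hankel determinant `det (c_{α+i+j})_{0 ≤ i,j ≤ k-1}` of a sequence in a commutative ring.
As for `tau`, the size `k` is an integer and the determinant is `0` for `k < 0`. -/
def hankelDet (c : ℤ → R) (k α : ℤ) : R :=
  if k < 0 then 0
  else det (of fun i j : Fin k.toNat => c (α + (i : ℕ) + (j : ℕ)))

theorem hankelDet_of_neg (c : ℤ → R) {k : ℤ} (hk : k < 0) (α : ℤ) : hankelDet c k α = 0 :=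
  if_pos hk

theorem hankelDet_natCast (c : ℤ → R) (n : ℕ) (α : ℤ) :
    hankelDet c n α = det (of fun i j : Fin n => c (α + (i : ℕ) + (j : ℕ))) :=
  if_neg (Int.natCast_nonneg n).not_gt

theorem hankelDet_zero (c : ℤ → R) (α : ℤ) : hankelDet c 0 α = 1 := by
  simpa using hankelDet_natCast c 0 α

theorem hankelDet_natCast_add_two_mul (c : ℤ → R) (n : ℕ) (α : ℤ) :
    hankelDet c (n + 2 : ℕ) (α - 1) * hankelDet c n (α + 1) =
      hankelDet c (n + 1 : ℕ) (α - 1) * hankelDet c (n + 1 : ℕ) (α + 1) -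
        hankelDet c (n + 1 : ℕ) α ^ 2 := by
  simp only [hankelDet_natCast]
  have h := desnanot_jacobi (of fun i j : Fin (n + 2) => c (α - 1 + (i : ℕ) + (j : ℕ)))
  have succ_succ (i j : ℕ) : α - 1 + (i + 1 : ℕ) + (j + 1 : ℕ) = α + 1 + i + j := by grind
  have succ_left (i j : ℕ) : α - 1 + (i + 1 : ℕ) + j = α + i + j := by grind
  have succ_right (i j : ℕ) : α - 1 + i + (j + 1 : ℕ) = α + i + j := by grind
  simp only [submatrix, of_apply, Fin.val_succ, Fin.val_castSucc, succ_succ, succ_left,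
    succ_right] at h
  rw [h]
  ring

theorem hankelDet_add_one_mul_hankelDet_sub_one (c : ℤ → R) (k α : ℤ) :
    hankelDet c (k + 1) (α - 1) * hankelDet c (k - 1) (α + 1) =
      hankelDet c k (α - 1) * hankelDet c k (α + 1) - hankelDet c k α ^ 2 := by
  rcases lt_trichotomy k 0 with hk | rfl | hk
  · simp [hankelDet_of_neg c hk, hankelDet_of_neg c (show k - 1 < 0 by lia)]
  · simp [hankelDet_zero, hankelDet_of_neg]
  · obtain ⟨n, rfl⟩ : ∃ n : ℕ, k = n + 1 := ⟨(k - 1).toNat, by lia⟩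
    simpa [add_assoc] using hankelDet_natCast_add_two_mul c n α

theorem zero_curvature_identity_general (c : ℤ → R) (k α : ℤ) :
    hankelDet c k α ^ 2 *
        (hankelDet c (k + 2) (α - 1) * hankelDet c k (α + 1) -
          hankelDet c (k + 1) (α - 1) * hankelDet c (k + 1) (α + 1)) =
      hankelDet c (k + 1) α ^ 2 *
        (hankelDet c (k + 1) (α - 1) * hankelDet c (k - 1) (α + 1) -
          hankelDet c k (α - 1) * hankelDet c k (α + 1)) := by
  have relation_succ := hankelDet_add_one_mul_hankelDet_sub_one c (k + 1) α
  rw [add_assoc, one_add_one_eq_two, add_sub_cancel_right] at relation_succ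
  rw [relation_succ, hankelDet_add_one_mul_hankelDet_sub_one c k α]
  ring

end HankelDet

theorem zero_curvature_identity (c : ℤ → ℂ) (k : ℤ) (hk : 1 ≤ k) (α : ℤ) :
    (tau c k α) ^ 2 *
        (tau c (k + 2) (α - 1) * tau c k (α + 1) -
          tau c (k + 1) (α - 1) * tau c (k + 1) (α + 1)) =
      (tau c (k + 1) α) ^ 2 *
        (tau c (k + 1) (α - 1) * tau c (k - 1) (α + 1) -
          tau c k (α - 1) * tau c k (α + 1)) :=
  zero_curvature_identity_general c k α
end

section
/- Let t : ℤ → ℤ → ℂ (written t_k^{(α)}) be any family satisfying: t_k^{(α)} = 0 for k < 0; t_0^{(α)} = 1 for all α; t_k^{(α)} ≠ 0 for all k ≥ 0 and all α; and the identity (t_k^{(α)})² · (t_{k+2}^{(α−1)} t_k^{(α+1)} − t_{k+1}^{(α−1)} t_{k+1}^{(α+1)}) = (t_{k+1}^{(α)})² · (t_{k+1}^{(α−1)} t_{k−1}^{(α+1)} − t_k^{(α−1)} t_k^{(α+1)}) for all k ≥ 0 and all α ∈ ℤ. Then for all k ≥ 0 and all α ∈ ℤ, the Q-system relation t_{k+1}^{(α−1)}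 t_{k−1}^{(α+1)} = t_k^{(α+1)} t_k^{(α−1)} − (t_k^{(α)})² holds. -/
/-!
Write `M_k` for the minor `t_{k+1}^{(α-1)} t_{k-1}^{(α+1)} - t_k^{(α-1)} t_k^{(α+1)}`. The zero
curvature identity reads `(t_k^{(α)})² M_{k+1} = (t_{k+1}^{(α)})² M_k`, so the ratio
`M_k / (t_k^{(α)})²` does not depend on `k`. Its value at `k = 0` is `-1` by the boundary
conditions, and `M_k = -(t_k^{(α)})²` is the Q-system relation.
-/

theorem mul_eq_mul_of_mul_succ_eq {M : Type*} [CommMonoidWithZero M] [IsCancelMulZero M]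
    {u v : ℤ → M} {m n : ℤ} (hv : ∀ k, m ≤ k → v k ≠ 0)
    (huv : ∀ k, m ≤ k → v k * u (k + 1) = v (k + 1) * u k) (hmn : m ≤ n) :
    v m * u n = v n * u m := by
  induction n, hmn using Int.leInduction with
  | base => rfl
  | succ n hmn ih =>
    apply mul_left_cancel₀ (hv n hmn)
    calc
      v n * (v m * u (n + 1)) = v m * (v n * u (n + 1)) := mul_left_comm ..
      _ = v m * (v (n + 1) * u n) := by rw [huv n hmn]
      _ = v (n + 1) * (v m * u n) := mul_left_comm ..
      _ = v (n + 1) * (v n * u m) := by rw [ih]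
      _ = v n * (v (n + 1) * u m) := mul_left_comm ..

section CrossMinor

variable {R : Type*} [CommRing R]

/-- The `2 × 2` minor `t_{k+1}^{(α-1)} t_{k-1}^{(α+1)} - t_k^{(α-1)} t_k^{(α+1)}`, whose ratio to
`(t_k^{(α)})²` is the conserved quantity of the zero curvature identity. The value `t_k^{(α)}` is
encoded as `t k α`. -/
def crossMinor (t : ℤ → ℤ → R) (k α : ℤ) : R :=
  t (k + 1) (α - 1) * t (k - 1) (α + 1) - t k (α - 1) * t k (α + 1)

theorem crossMinor_add_one (t : ℤ → ℤ → R) (k α : ℤ) :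
    crossMinor t (k + 1) α =
      t (k + 2) (α - 1) * t k (α + 1) - t (k + 1) (α - 1) * t (k + 1) (α + 1) := by
  rw [crossMinor, add_sub_cancel_right, add_assoc, one_add_one_eq_two]

theorem crossMinor_zero {t : ℤ → ℤ → R} {α : ℤ} (h0 : t (-1) (α + 1) = 0)
    (h1 : ∀ β, t 0 β = 1) : crossMinor t 0 α = -1 := by
  simp [crossMinor, h0, h1]

theorem crossMinor_eq_neg_sq [NoZeroDivisors R] {t : ℤ → ℤ → R} {α : ℤ}
    (h0 : t (-1) (α + 1) = 0) (h1 : ∀ β, t 0 β = 1) (hne : ∀ k, 0 ≤ k → t k α ≠ 0)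
    (hzc : ∀ k, 0 ≤ k →
      t k α ^ 2 * crossMinor t (k + 1) α = t (k + 1) α ^ 2 * crossMinor t k α)
    {k : ℤ} (hk : 0 ≤ k) : crossMinor t k α = -t k α ^ 2 := by
  have conserved : t 0 α ^ 2 * crossMinor t k α = t k α ^ 2 * crossMinor t 0 α :=
    mul_eq_mul_of_mul_succ_eq (u := (crossMinor t · α)) (v := (t · α ^ 2))
      (fun k hk => pow_ne_zero 2 (hne k hk)) hzc hk
  simpa [h1, crossMinor_zero h0 h1] using conserved

theorem qsystem_from_zero_curvature_general [NoZeroDivisors R] {t : ℤ → ℤ → R} {α : ℤ}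
    (h0 : t (-1) (α + 1) = 0) (h1 : ∀ β, t 0 β = 1) (hne : ∀ k, 0 ≤ k → t k α ≠ 0)
    (hzc : ∀ k, 0 ≤ k →
      t k α ^ 2 * (t (k + 2) (α - 1) * t k (α + 1) - t (k + 1) (α - 1) * t (k + 1) (α + 1)) =
        t (k + 1) α ^ 2 * (t (k + 1) (α - 1) * t (k - 1) (α + 1) - t k (α - 1) * t k (α + 1)))
    {k : ℤ} (hk : 0 ≤ k) :
    t (k + 1) (α - 1) * t (k - 1) (α + 1) = t k (α + 1) * t k (α - 1) - t k α ^ 2 := by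
  have hminor : crossMinor t k α = -t k α ^ 2 :=
    crossMinor_eq_neg_sq h0 h1 hne (fun k hk => by rw [crossMinor_add_one]; exact hzc k hk) hk
  rw [crossMinor] at hminor
  linear_combination hminor

end CrossMinor

theorem qsystem_from_zero_curvature (t : ℤ → ℤ → ℂ)
    (h0 : ∀ k : ℤ, k < 0 → ∀ α : ℤ, t k α = 0)
    (h1 : ∀ α : ℤ, t 0 α = 1)
    (hne : ∀ k : ℤ, 0 ≤ k → ∀ α : ℤ, t k α ≠ 0)
    (hzc : ∀ k : ℤ, 0 ≤ k → ∀ α : ℤ,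
      (t k α) ^ 2 * (t (k + 2) (α - 1) * t k (α + 1) - t (k + 1) (α - 1) * t (k + 1) (α + 1)) =
        (t (k + 1) α) ^ 2 *
          (t (k + 1) (α - 1) * t (k - 1) (α + 1) - t k (α - 1) * t k (α + 1))) :
    ∀ k : ℤ, 0 ≤ k → ∀ α : ℤ,
      t (k + 1) (α - 1) * t (k - 1) (α + 1) = t k (α + 1) * t k (α - 1) - (t k α) ^ 2 :=
  fun _ hk α => qsystem_from_zero_curvature_general (h0 (-1) (by norm_num) (α + 1)) h1
    (fun k hk => hne k hk α) (fun k hk => hzc k hk α) hk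
end

section
/- For all integers k, ℓ ≥ 0 and all α, β ∈ ℤ, the tau-functions satisfy equation (1) of the generalized Q-system: (τ_{k,ℓ}^{(α+1,β)})² = τ_{k,ℓ}^{(α,β)} τ_{k,ℓ}^{(α+2,β)} + τ_{k+1,ℓ+1}^{(α,β)} τ_{k−1,ℓ−1}^{(α+2,β)} − τ_{k+1,ℓ}^{(α,β)} τ_{k−1,ℓ}^{(α+2,β)}. -/
/-- The `ĜL₃` tau-function (with `E(z) = 0`): for `k ≥ ℓ ≥ 0`, `(−1)^{ℓ(ℓ+1)/2}` times the
determinant of the `k × k` matrix whose `(i,j)` entry is `d_{α+i+j}` for `0 ≤ j ≤ ℓ-1` and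
`c_{α−β+i+j−ℓ}` for `ℓ ≤ j ≤ k-1`; it is set to `0` whenever `k < ℓ`, `ℓ < 0`, or `k < 0`. -/
noncomputable def tau3Z (c d : ℤ → ℂ) (k ℓ α β : ℤ) : ℂ :=
  if k < ℓ ∨ ℓ < 0 ∨ k < 0 then 0
  else
    (-1 : ℂ) ^ (ℓ.toNat * (ℓ.toNat + 1) / 2) *
      Matrix.det (Matrix.of fun i j : Fin k.toNat =>
        if ((j : ℕ) : ℤ) < ℓ then d (α + (i : ℕ) + (j : ℕ))
        else c (α - β + (i : ℕ) + (j : ℕ) - ℓ))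

/-!
Let `B` be the `(k + 1) × k` matrix with columns `d₀, …, d_{ℓ-1}, c₀, …, c_{k-ℓ-1}`, where
`dⱼ = (d_{α+i+j})ᵢ` and `cⱼ = (c_{α-β+i+j})ᵢ`, and let `A` be the same matrix for `α + 1`, with
columns `d₁, …, d_ℓ, c₁, …, c_{k-ℓ}`. Write `a` and `b` for the vectors of signed maximal minors of
`A` and `B`. Cramer's rule puts `a₀ e_k - a_k e₀` in the column span of `A`, the coefficients being
minors of `A` without its first and last rows. Pair this with `b`. One side becomes
`a₀ b_k - a_k b₀`, which up to sign is `τ_{k,ℓ}^{(α,β)} τ_{k,ℓ}^{(α+2,β)} - (τ_{k,ℓ}^{(α+1,β)})²`.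
On the other side `b` annihilates every column of `B`, so of the columns of `A` only `d_ℓ` and
`c_{k-ℓ}` survive, and they extend `B` to the matrices of `τ_{k+1,ℓ+1}` and `τ_{k+1,ℓ}`.
-/

open Matrix

theorem sum_ite_val_add_one_eq {M : Type*} [AddCommMonoid M] {ℓ : ℤ} {n : ℕ} (x : M)
    (hℓ : ℓ ≤ n) :
    (∑ j : Fin n, if (j : ℤ) + 1 = ℓ then x else 0) = if 0 < ℓ then x else 0 := by
  split_ifs with h
  · rw [Finset.sum_eq_single_of_mem (⟨(ℓ - 1).toNat, by omega⟩ : Fin n) (Finset.mem_univ _)]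
    · exact if_pos (by simp only; omega)
    · intro j _ hj
      exact if_neg fun h' => hj (Fin.ext (by simp only; omega))
  · exact Finset.sum_eq_zero fun j _ => if_neg (by omega)

section SignedMinors

variable {R : Type*} [CommRing R]

theorem neg_one_pow_mul_self (n : ℕ) : (-1 : R) ^ n * (-1) ^ n = 1 := by
  rw [← mul_pow, neg_one_mul, neg_neg, one_pow]

variable {n : ℕ}

/-- The signed maximal minors of an `(n + 1) × n` matrix `B`. Pairing them with a vector `v` gives
the determinant of `B` with `v` inserted as a new first column. -/
def signedMinors (B : Matrix (Fin (n + 1)) (Fin n) R) : Fin (n + 1) → R :=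
  fun i => (-1) ^ (i : ℕ) * (B.submatrix i.succAbove id).det

theorem signedMinors_zero (B : Matrix (Fin (n + 1)) (Fin n) R) :
    signedMinors B 0 = (B.submatrix Fin.succ id).det := by
  simp [signedMinors]

theorem signedMinors_last (B : Matrix (Fin (n + 1)) (Fin n) R) :
    signedMinors B (Fin.last n) = (-1) ^ n * (B.submatrix Fin.castSucc id).det := by
  simp [signedMinors]

theorem signedMinors_dotProduct_col (M : Matrix (Fin (n + 1)) (Fin (n + 1)) R)
    (p : Fin (n + 1)) :
    signedMinors (M.submatrix id p.succAbove) ⬝ᵥ M.col p = (-1) ^ (p : ℕ) * M.det := by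
  rw [det_succ_column M p, Finset.mul_sum]
  refine Finset.sum_congr rfl fun i _ => ?_
  simp only [signedMinors, submatrix_submatrix, Function.id_comp, Function.comp_id, col_apply]
  rw [pow_add]
  linear_combination (-(-1) ^ (i : ℕ) * M i p * (M.submatrix i.succAbove p.succAbove).det) *
    neg_one_pow_mul_self (R := R) p

theorem signedMinors_vecMul_self (B : Matrix (Fin (n + 1)) (Fin n) R) :
    signedMinors B ᵥ* B = 0 := by
  ext j
  let M := B.submatrix id (Fin.cons j id)
  have hM : M.det = 0 := det_zero_of_column_eq (Fin.succ_ne_zero j).symm fun i => by simp [M]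
  have h := signedMinors_dotProduct_col M 0
  rwa [hM, mul_zero] at h

/-- The maximal minors of `A` without its first and last rows, indexed by the omitted column and
signed as in the last column of the adjugate of `A` without its first row. -/
def signedInteriorMinors (A : Matrix (Fin (n + 2)) (Fin (n + 1)) R) : Fin (n + 1) → R :=
  fun j => (-1) ^ (n + j : ℕ) * (A.submatrix (Fin.succ ∘ Fin.castSucc) j.succAbove).det

theorem signedInteriorMinors_eq_cramer (A : Matrix (Fin (n + 2)) (Fin (n + 1)) R) :
    signedInteriorMinors A = (A.submatrix Fin.succ id).cramer (Pi.single (Fin.last n) 1) := by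
  ext j
  simp [signedInteriorMinors, cramer_eq_adjugate_mulVec, adjugate_fin_succ_eq_det_submatrix,
    Function.comp_def]

/-- Below the first row this is Cramer's rule; the first row is a Laplace expansion of `A` without
its last row. -/
theorem mulVec_signedInteriorMinors (A : Matrix (Fin (n + 2)) (Fin (n + 1)) R) :
    A *ᵥ signedInteriorMinors A =
      Pi.single (Fin.last (n + 1)) (signedMinors A 0) -
        Pi.single 0 (signedMinors A (Fin.last (n + 1))) := by
  ext i
  refine Fin.cases ?_ (fun i => ?_) i
  · have hlaplace := det_succ_row_zero (A.submatrix Fin.castSucc id)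
    simp only [signedMinors_last, signedInteriorMinors, hlaplace, mulVec, dotProduct, Pi.sub_apply,
      Pi.single_eq_same, Pi.single_eq_of_ne Fin.last_pos.ne, zero_sub, Finset.mul_sum,
      ← Finset.sum_neg_distrib]
    refine Finset.sum_congr rfl fun j _ => ?_
    simp only [submatrix_submatrix, submatrix_apply, Fin.castSucc_zero, id, Function.comp_def,
      Fin.castSucc_succ]
    rw [pow_add, pow_succ]
    ring
  · have hcramer := congrFun (mulVec_cramer (A.submatrix Fin.succ id) (Pi.single (Fin.last n) 1)) i
    rw [← signedInteriorMinors_eq_cramer] at hcramer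
    simp only [signedMinors_zero, Pi.sub_apply, Pi.single_eq_of_ne (Fin.succ_ne_zero i), sub_zero]
    refine hcramer.trans ?_
    simp [Pi.single_apply, ← Fin.succ_last]

theorem signedMinors_zero_mul_last_sub (A B : Matrix (Fin (n + 2)) (Fin (n + 1)) R) :
    signedMinors A 0 * signedMinors B (Fin.last (n + 1)) -
        signedMinors A (Fin.last (n + 1)) * signedMinors B 0 =
      signedMinors B ᵥ* A ⬝ᵥ signedInteriorMinors A := by
  have h := congrArg (signedMinors B ⬝ᵥ ·) (mulVec_signedInteriorMinors A)
  simp only [dotProduct_mulVec, dotProduct_sub, dotProduct_single] at h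
  rw [mul_comm (signedMinors A 0), mul_comm (signedMinors A _), ← h]

end SignedMinors

section MixedHankel

variable {R : Type*} (c d : ℤ → R) (α β ℓ : ℤ) (m n : ℕ)

/-- The `m × n` matrix underlying the tau-function, for arbitrary `m` and `n`: a Hankel block in `d`
of `ℓ` columns followed by a Hankel block in `c`. -/
def mixedHankel : Matrix (Fin m) (Fin n) R :=
  of fun i j => if (j : ℤ) < ℓ then d (α + i + j) else c (α - β + i + j - ℓ)

theorem mixedHankel_submatrix_succ_id :
    (mixedHankel c d α β ℓ (m + 1) n).submatrix Fin.succ id =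
      mixedHankel c d (α + 1) β ℓ m n := by
  ext i j
  simp only [mixedHankel, submatrix_apply, of_apply, Fin.val_succ, id]
  push_cast
  ring_nf

theorem mixedHankel_submatrix_castSucc_id :
    (mixedHankel c d α β ℓ (m + 1) n).submatrix Fin.castSucc id = mixedHankel c d α β ℓ m n := rfl

theorem mixedHankel_submatrix_succ_comp_castSucc {o : Type*} (f : o → Fin n) :
    (mixedHankel c d α β ℓ (m + 2) n).submatrix (Fin.succ ∘ Fin.castSucc) f =
      (mixedHankel c d (α + 1) β ℓ m n).submatrix id f := by
  rw [← mixedHankel_submatrix_succ_id, submatrix_submatrix]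
  rfl

theorem mixedHankel_submatrix_id_castSucc :
    (mixedHankel c d α β ℓ m (n + 1)).submatrix id Fin.castSucc = mixedHankel c d α β ℓ m n := rfl

variable {n}

theorem mixedHankel_submatrix_id_succAbove (p : Fin (n + 1)) :
    (mixedHankel c d α β (p + 1) m (n + 1)).submatrix id p.succAbove =
      mixedHankel c d α β p m n := by
  ext i j
  rcases lt_or_ge (j : ℕ) p with h | h
  · have h' : (j : ℤ) < p + 1 := by omega
    simp only [mixedHankel, submatrix_apply, of_apply, id, Fin.succAbove_of_castSucc_lt p j h,
      Fin.val_castSucc, if_pos h', Nat.cast_lt, if_pos h]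
  · have h' : ¬ (j : ℤ) + 1 < p + 1 := by omega
    simp only [mixedHankel, submatrix_apply, of_apply, id,
      Fin.succAbove_of_le_castSucc p j h, Fin.val_succ, Nat.cast_succ, if_neg h', Nat.cast_lt,
      if_neg h.not_gt]
    ring_nf

theorem col_mixedHankel_add_one_of_eq (j : Fin n) :
    (mixedHankel c d (α + 1) β (j + 1) m n).col j =
      (mixedHankel c d α β (j + 1 + 1) m (n + 1)).col j.succ := by
  ext i
  simp only [mixedHankel, col_apply, of_apply, Fin.val_succ, Nat.cast_succ, if_pos (lt_add_one _)]
  ring_nf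

variable {ℓ}

theorem col_mixedHankel_add_one_of_ne {j : Fin n} (hj : (j : ℤ) + 1 ≠ ℓ) :
    (mixedHankel c d (α + 1) β ℓ m n).col j =
      (mixedHankel c d α β ℓ m (n + 1)).col j.succ := by
  ext i
  have hlt : (j : ℤ) + 1 < ℓ ↔ (j : ℤ) < ℓ := by omega
  simp only [mixedHankel, col_apply, of_apply, Fin.val_succ, Nat.cast_succ, hlt]
  ring_nf

end MixedHankel

section MixedHankelDet

variable {R : Type*} [CommRing R] (c d : ℤ → R) (α β : ℤ) {ℓ : ℤ} {n : ℕ}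

theorem signedMinors_vecMul_mixedHankel_of_eq (j : Fin n) :
    (signedMinors (mixedHankel c d α β (j + 1) (n + 1) n) ᵥ*
        mixedHankel c d (α + 1) β (j + 1) (n + 1) n) j =
      (-1) ^ (j + 1 : ℕ) * (mixedHankel c d α β (j + 1 + 1) (n + 1) (n + 1)).det := by
  have h := signedMinors_dotProduct_col (mixedHankel c d α β (j + 1 + 1) (n + 1) (n + 1)) j.succ
  have hdel := mixedHankel_submatrix_id_succAbove c d α β (n + 1) j.succ
  simp only [Fin.val_succ, Nat.cast_succ] at hdel
  rwa [hdel, ← col_mixedHankel_add_one_of_eq] at h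

theorem signedMinors_vecMul_mixedHankel_last (hℓ : ℓ ≤ n) :
    (signedMinors (mixedHankel c d α β ℓ (n + 2) (n + 1)) ᵥ*
        mixedHankel c d (α + 1) β ℓ (n + 2) (n + 1)) (Fin.last n) =
      (-1) ^ (n + 1) * (mixedHankel c d α β ℓ (n + 2) (n + 2)).det := by
  have h := signedMinors_dotProduct_col (mixedHankel c d α β ℓ (n + 2) (n + 2)) (Fin.last (n + 1))
  have hne : ((Fin.last n : ℕ) : ℤ) + 1 ≠ ℓ := by simp only [Fin.val_last]; omega
  rwa [Fin.succAbove_last, mixedHankel_submatrix_id_castSucc, ← Fin.succ_last,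
    ← col_mixedHankel_add_one_of_ne c d α β _ hne] at h

theorem signedMinors_vecMul_mixedHankel_castSucc {j : Fin n} (hj : (j : ℤ) + 1 ≠ ℓ) :
    (signedMinors (mixedHankel c d α β ℓ (n + 2) (n + 1)) ᵥ*
        mixedHankel c d (α + 1) β ℓ (n + 2) (n + 1)) j.castSucc = 0 := by
  have hcol : (mixedHankel c d (α + 1) β ℓ (n + 2) (n + 1)).col j.castSucc =
      (mixedHankel c d α β ℓ (n + 2) (n + 1)).col j.succ :=
    col_mixedHankel_add_one_of_ne c d α β _ hj
  exact (congrArg (_ ⬝ᵥ ·) hcol).trans (congrFun (signedMinors_vecMul_self _) j.succ)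

theorem signedMinors_vecMul_mixedHankel_mul (hℓ : ℓ ≤ n + 1) (j : Fin (n + 1)) :
    (signedMinors (mixedHankel c d α β ℓ (n + 2) (n + 1)) ᵥ*
          mixedHankel c d (α + 1) β ℓ (n + 2) (n + 1)) j *
        signedInteriorMinors (mixedHankel c d (α + 1) β ℓ (n + 2) (n + 1)) j =
      (-1) ^ (n + 1) * ((if (j : ℤ) + 1 = ℓ then
        (mixedHankel c d α β (ℓ + 1) (n + 2) (n + 2)).det *
          (mixedHankel c d (α + 2) β (ℓ - 1) n n).det else 0) +
      (if j = Fin.last n then if ℓ ≤ n then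
        (mixedHankel c d α β ℓ (n + 2) (n + 2)).det *
          (mixedHankel c d (α + 2) β ℓ n n).det else 0 else 0)) := by
  have hα : α + 1 + 1 = α + 2 := by ring
  rw [signedInteriorMinors, mixedHankel_submatrix_succ_comp_castSucc, hα]
  by_cases hj : (j : ℤ) + 1 = ℓ
  · subst hj
    have hlast : ¬ (j = Fin.last n ∧ (j : ℤ) + 1 ≤ n) := by
      rintro ⟨rfl, h⟩
      simp at h
    rw [signedMinors_vecMul_mixedHankel_of_eq, mixedHankel_submatrix_id_succAbove, if_pos rfl,
      ← ite_and, if_neg hlast, add_sub_cancel_right, pow_succ, pow_succ, pow_add]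
    linear_combination (-(-1) ^ n * (mixedHankel c d α β (j + 1 + 1) (n + 2) (n + 2)).det *
      (mixedHankel c d (α + 2) β j n n).det) * neg_one_pow_mul_self (R := R) j
  rw [if_neg hj, zero_add]
  induction j using Fin.lastCases with
  | last =>
    have hn : ℓ ≤ n := by rw [Fin.val_last] at hj; omega
    rw [signedMinors_vecMul_mixedHankel_last c d α β hn, if_pos rfl, if_pos hn, Fin.succAbove_last,
      mixedHankel_submatrix_id_castSucc, Fin.val_last, pow_add _ n n, neg_one_pow_mul_self]
    ring
  | cast j =>
    rw [signedMinors_vecMul_mixedHankel_castSucc c d α β (j := j) hj, zero_mul,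
      if_neg (Fin.castSucc_ne_last j), mul_zero]

theorem det_mixedHankel_sq (hℓ : ℓ ≤ n + 1) :
    (mixedHankel c d (α + 1) β ℓ (n + 1) (n + 1)).det ^ 2 =
      (mixedHankel c d α β ℓ (n + 1) (n + 1)).det *
          (mixedHankel c d (α + 2) β ℓ (n + 1) (n + 1)).det -
        (if 0 < ℓ then (mixedHankel c d α β (ℓ + 1) (n + 2) (n + 2)).det *
          (mixedHankel c d (α + 2) β (ℓ - 1) n n).det else 0) -
        (if ℓ ≤ n then (mixedHankel c d α β ℓ (n + 2) (n + 2)).det *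
          (mixedHankel c d (α + 2) β ℓ n n).det else 0) := by
  have hα : α + 1 + 1 = α + 2 := by ring
  have h := signedMinors_zero_mul_last_sub (mixedHankel c d (α + 1) β ℓ (n + 2) (n + 1))
    (mixedHankel c d α β ℓ (n + 2) (n + 1))
  simp only [dotProduct, signedMinors_vecMul_mixedHankel_mul c d α β hℓ, ← Finset.mul_sum,
    Finset.sum_add_distrib, Finset.sum_ite_eq', Finset.mem_univ, if_true] at h
  rw [sum_ite_val_add_one_eq _ (by exact_mod_cast hℓ)] at h
  simp only [signedMinors_zero, signedMinors_last, mixedHankel_submatrix_succ_id,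
    mixedHankel_submatrix_castSucc_id, hα] at h
  refine (isUnit_neg_one.pow (n + 1)).mul_left_cancel ?_
  linear_combination -h

end MixedHankelDet

section Tau

/-- `(-1)^{ℓ(ℓ+1)/2}`, the sign in the normalization of the tau-function. -/
def tauSign (R : Type*) [CommRing R] (l : ℕ) : R := (-1) ^ (l * (l + 1) / 2)

variable {R : Type*} [CommRing R]

theorem tauSign_mul_self (l : ℕ) : tauSign R l * tauSign R l = 1 :=
  neg_one_pow_mul_self _

theorem tauSign_succ (l : ℕ) : tauSign R (l + 1) = (-1) ^ (l + 1) * tauSign R l := by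
  have h := Nat.triangle_succ (l + 1)
  rw [Nat.add_sub_cancel, Nat.add_sub_cancel, mul_comm, mul_comm (l + 1) l] at h
  rw [tauSign, tauSign, h, pow_add, mul_comm]

theorem tauSign_add_two_mul (l : ℕ) : tauSign R (l + 2) * tauSign R l = -1 := by
  have hsign := neg_one_pow_mul_self (R := R) (l + 1)
  rw [tauSign_succ, tauSign_succ, pow_succ]
  linear_combination (-(-1 : R) ^ (l + 1) * (-1) ^ (l + 1)) * tauSign_mul_self (R := R) l - hsign

variable (c d : ℤ → R)

/-- The tau-function `τ_{k,ℓ}^{(α,β)}` of `tau3Z`, with values in an arbitrary commutative ring. -/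
def hankelTau (k ℓ α β : ℤ) : R :=
  if k < ℓ ∨ ℓ < 0 ∨ k < 0 then 0
  else tauSign R ℓ.toNat * (mixedHankel c d α β ℓ k.toNat k.toNat).det

variable {c d} {ℓ α α' β : ℤ} {n : ℕ}

theorem hankelTau_eq_zero {k : ℤ} (h : k < ℓ ∨ ℓ < 0 ∨ k < 0) : hankelTau c d k ℓ α β = 0 :=
  if_pos h

theorem hankelTau_natCast (h₀ : 0 ≤ ℓ) (h₁ : ℓ ≤ n) :
    hankelTau c d n ℓ α β = tauSign R ℓ.toNat * (mixedHankel c d α β ℓ n n).det :=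
  if_neg (by omega)

theorem hankelTau_mul_hankelTau (h₀ : 0 ≤ ℓ) (h₁ : ℓ ≤ n) :
    hankelTau c d n ℓ α β * hankelTau c d n ℓ α' β =
      (mixedHankel c d α β ℓ n n).det * (mixedHankel c d α' β ℓ n n).det := by
  rw [hankelTau_natCast h₀ h₁, hankelTau_natCast h₀ h₁, mul_mul_mul_comm, tauSign_mul_self, one_mul]

theorem hankelTau_add_two_mul (h₀ : 0 ≤ ℓ) :
    hankelTau c d (n + 2 : ℕ) ℓ α β * hankelTau c d n ℓ α' β =
      if ℓ ≤ n then (mixedHankel c d α β ℓ (n + 2) (n + 2)).det *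
        (mixedHankel c d α' β ℓ n n).det else 0 := by
  split_ifs with h
  · rw [hankelTau_natCast h₀ (by omega), hankelTau_natCast h₀ h, mul_mul_mul_comm,
      tauSign_mul_self, one_mul]
  · rw [hankelTau_eq_zero (.inl (not_le.mp h)), mul_zero]

theorem hankelTau_add_one_mul_sub_one (h₀ : 0 ≤ ℓ) (h₁ : ℓ ≤ n + 1) :
    hankelTau c d (n + 2 : ℕ) (ℓ + 1) α β * hankelTau c d n (ℓ - 1) α' β =
      -if 0 < ℓ then (mixedHankel c d α β (ℓ + 1) (n + 2) (n + 2)).det *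
        (mixedHankel c d α' β (ℓ - 1) n n).det else 0 := by
  split_ifs with h
  · have hsucc : (ℓ + 1).toNat = (ℓ - 1).toNat + 2 := by omega
    rw [hankelTau_natCast (by omega) (by omega), hankelTau_natCast (by omega) (by omega),
      mul_mul_mul_comm, hsucc, tauSign_add_two_mul, neg_one_mul]
  · rw [hankelTau_eq_zero (ℓ := ℓ - 1) (by omega), mul_zero, neg_zero]

end Tau

theorem gl3_Qsystem_eq1_general {R : Type*} [CommRing R] (c d : ℤ → R) (k ℓ α β : ℤ) :
    hankelTau c d k ℓ (α + 1) β ^ 2 =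
      hankelTau c d k ℓ α β * hankelTau c d k ℓ (α + 2) β +
        hankelTau c d (k + 1) (ℓ + 1) α β * hankelTau c d (k - 1) (ℓ - 1) (α + 2) β -
        hankelTau c d (k + 1) ℓ α β * hankelTau c d (k - 1) ℓ (α + 2) β := by
  by_cases h : k < ℓ ∨ ℓ < 0 ∨ k < 0
  · simp [hankelTau_eq_zero h, hankelTau_eq_zero (k := k - 1) (ℓ := ℓ - 1) (by omega),
      hankelTau_eq_zero (k := k - 1) (ℓ := ℓ) (by omega)]
  push Not at h
  obtain ⟨hkℓ, h₀, hk⟩ := h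
  lift k to ℕ using hk
  cases k with
  | zero =>
    obtain rfl : ℓ = 0 := by omega
    simp [hankelTau, tauSign]
  | succ n =>
    have hpred : ((n + 1 : ℕ) : ℤ) - 1 = n := by omega
    have hsucc : ((n + 1 : ℕ) : ℤ) + 1 = (n + 2 : ℕ) := by omega
    have hn : ℓ ≤ n + 1 := by omega
    rw [hpred, hsucc, sq, hankelTau_mul_hankelTau h₀ hkℓ, hankelTau_mul_hankelTau h₀ hkℓ,
      hankelTau_add_one_mul_sub_one h₀ hn, hankelTau_add_two_mul h₀, ← sq,
      det_mixedHankel_sq c d α β hn]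
    ring

theorem tau3Z_eq_hankelTau : tau3Z = hankelTau (R := ℂ) := rfl

theorem gl3_Qsystem_eq1 (c d : ℤ → ℂ) (k ℓ : ℤ) (hk : 0 ≤ k) (hℓ : 0 ≤ ℓ) (α β : ℤ) :
    (tau3Z c d k ℓ (α + 1) β) ^ 2 =
      tau3Z c d k ℓ α β * tau3Z c d k ℓ (α + 2) β +
        tau3Z c d (k + 1) (ℓ + 1) α β * tau3Z c d (k - 1) (ℓ - 1) (α + 2) β -
        tau3Z c d (k + 1) ℓ α β * tau3Z c d (k - 1) ℓ (α + 2) β := by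
  rw [tau3Z_eq_hankelTau]
  exact gl3_Qsystem_eq1_general c d k ℓ α β
end

section
/- For all integers k, ℓ ≥ 0 and all α, β ∈ ℤ, the tau-functions satisfy equation (2) of the generalized Q-system (a T-system relation): τ_{k,ℓ}^{(α+1,β)} τ_{k,ℓ−1}^{(α+2,β)} = τ_{k−1,ℓ−1}^{(α+2,β)} τ_{k+1,ℓ}^{(α+1,β)} + τ_{k,ℓ−1}^{(α+1,β)} τ_{k,ℓ}^{(α+2,β)}. -/
/-!
All six determinants are minors of the matrix of `τ_{k+1,ℓ}^{(α+1,β)}`: deleting the first row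
raises `α` by one, deleting the last `d`-column lowers `ℓ` by one because the `c`-columns stay
aligned, and deleting the last row or the last column changes neither. The relation is therefore the
Desnanot–Jacobi identity for the first and last rows, the last `d`-column and the last column; each
product pairs an index `ℓ` with an index `ℓ - 1`, so the sign prefactors agree.

Desnanot–Jacobi is the three-term Plücker relation with two standard basis vectors as the new
columns, and the Plücker relations come from Cramer's rule: expand `det A • v` in the columns of `A`
and substitute it for a column of a second matrix.
-/

open Matrix

section Determinants

variable {R : Type*} [CommRing R]

section Exchange

variable {n : Type*} [Fintype n] [DecidableEq n]

theorem det_updateCol_updateCol_swap (A : Matrix n n R) {r s : n} (hrs : r ≠ s) (u v : n → R) :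
    ((A.updateCol r u).updateCol s v).det = -((A.updateCol r v).updateCol s u).det := by
  have swap_columns : (A.updateCol r u).updateCol s v =
      ((A.updateCol r v).updateCol s u).submatrix id (Equiv.swap r s) := by
    ext i j
    rcases eq_or_ne j s with rfl | hs
    · simp [hrs]
    rcases eq_or_ne j r with rfl | hr
    · simp [hrs]
    · simp [hs, hr, Equiv.swap_apply_of_ne_of_ne hr hs]
  rw [swap_columns, det_permute', Equiv.Perm.sign_swap hrs]
  simp

theorem det_mul_det_updateCol_eq_sum (A B : Matrix n n R) (s : n) (v : n → R) :
    A.det * (B.updateCol s v).det =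
      ∑ j, (B.updateCol s (A.col j)).det * (A.updateCol j v).det := by
  have cramer_smul_det : A.det • v = ∑ j, A.cramer v j • A.col j := by
    simp [← mulVec_cramer, mulVec_eq_sum, col]
  calc A.det * (B.updateCol s v).det = (B.updateCol s (A.det • v)).det :=
        (det_updateCol_smul ..).symm
    _ = B.cramer (∑ j, A.cramer v j • A.col j) s := by rw [cramer_smul_det, cramer_apply]
    _ = ∑ j, A.cramer v j * B.cramer (A.col j) s := by
        simp only [map_sum, map_smul, Finset.sum_apply, Pi.smul_apply, smul_eq_mul]
    _ = ∑ j, (B.updateCol s (A.col j)).det * (A.updateCol j v).det := by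
        simp only [cramer_apply, mul_comm]

theorem det_mul_det_updateCol_updateCol (A : Matrix n n R) {r s : n} (hrs : r ≠ s)
    (u v : n → R) :
    A.det * ((A.updateCol r u).updateCol s v).det =
      (A.updateCol r u).det * (A.updateCol s v).det -
        (A.updateCol r v).det * (A.updateCol s u).det := by
  have at_s : (A.updateCol r u).updateCol s (A.col s) = A.updateCol r u := by
    ext i j
    rcases eq_or_ne j s with rfl | hs <;> simp [*, hrs.symm]
  have at_r : ((A.updateCol r u).updateCol s (A.col r)).det = -(A.updateCol s u).det := by
    rw [det_updateCol_updateCol_swap A hrs]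
    congr
    exact updateCol_eq_self A r
  have elsewhere (j : n) (hj : j ≠ r ∧ j ≠ s) :
      ((A.updateCol r u).updateCol s (A.col j)).det = 0 :=
    det_zero_of_column_eq hj.2 fun i => by simp [hj.1, hj.2]
  rw [det_mul_det_updateCol_eq_sum,
    Fintype.sum_eq_add r s hrs fun j hj => by rw [elsewhere j hj, zero_mul], at_r, at_s]
  ring

theorem det_updateCol_single (A : Matrix n n R) (i j : n) :
    (A.updateCol j (Pi.single i 1)).det = A.adjugate j i := by
  rw [← cramer_apply, cramer_eq_adjugate_mulVec, mulVec_single_one, col_apply]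

end Exchange

theorem det_submatrix_succAbove_mul_det {n : ℕ} (M : Matrix (Fin (n + 2)) (Fin (n + 2)) R)
    (p r : Fin (n + 1)) :
    ((M.submatrix Fin.castSucc Fin.castSucc).submatrix p.succAbove r.succAbove).det * M.det =
      (M.submatrix Fin.castSucc Fin.castSucc).det *
          (M.submatrix p.castSucc.succAbove r.castSucc.succAbove).det -
        (M.submatrix Fin.castSucc r.castSucc.succAbove).det *
          (M.submatrix p.castSucc.succAbove Fin.castSucc).det := by
  have plucker := det_mul_det_updateCol_updateCol M (Fin.castSucc_lt_last r).ne
    (Pi.single p.castSucc 1) (Pi.single (Fin.last _) 1)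
  have leading_updateCol :
      (M.updateCol r.castSucc (Pi.single p.castSucc 1)).submatrix Fin.castSucc Fin.castSucc =
        (M.submatrix Fin.castSucc Fin.castSucc).updateCol r (Pi.single p 1) := by
    ext i j
    simp [updateCol_apply, Pi.single_apply]
  simp only [det_updateCol_single, adjugate_fin_succ_eq_det_submatrix, Fin.succAbove_last,
    leading_updateCol, Fin.val_last, Fin.val_castSucc] at plucker
  have sign_last : (-1 : R) ^ (n + 1) * (-1) ^ (n + 1) = 1 := by simp [← mul_pow]
  refine (isUnit_one.neg.pow (p + r : ℕ)).mul_left_cancel ?_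
  rw [pow_add _ (n + 1) (r : ℕ), pow_add _ (p : ℕ) (n + 1), pow_add _ (n + 1) (n + 1),
    sign_last] at plucker
  linear_combination plucker - sign_last * (-1) ^ (p + r : ℕ) *
    (M.submatrix Fin.castSucc r.castSucc.succAbove).det *
      (M.submatrix p.castSucc.succAbove Fin.castSucc).det

end Determinants

section Hankel

variable {R : Type*}

/-- The square matrix whose first `ℓ` columns form the Hankel matrix of `d` started at `a` and
whose remaining columns form the Hankel matrix of `c` started at `b`. The column index of the
second block is reduced by `ℓ` in `ℤ`, where the subtraction does not truncate. -/
def hankelPair (c d : ℤ → R) (k ℓ : ℕ) (a b : ℤ) : Matrix (Fin k) (Fin k) R :=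
  of fun i j => if (j : ℕ) < ℓ then d (a + i + j) else c (b + i + j - ℓ)

variable (c d : ℤ → R) (k ℓ : ℕ) (a b : ℤ)

theorem hankelPair_submatrix_castSucc_castSucc :
    (hankelPair c d (k + 1) ℓ a b).submatrix Fin.castSucc Fin.castSucc =
      hankelPair c d k ℓ a b := rfl

theorem hankelPair_submatrix_succ {m : Type*} (f : m → Fin (k + 1)) :
    (hankelPair c d (k + 1) ℓ a b).submatrix Fin.succ f =
      (hankelPair c d (k + 1) ℓ (a + 1) (b + 1)).submatrix Fin.castSucc f := by
  ext i j
  simp only [hankelPair, submatrix_apply, of_apply, Fin.val_succ, Fin.val_castSucc]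
  push_cast
  congr 2 <;> ring

theorem hankelPair_submatrix_castSucc_succAbove (hℓ : ℓ < k + 1) :
    (hankelPair c d (k + 1) (ℓ + 1) a b).submatrix Fin.castSucc (Fin.succAbove ⟨ℓ, hℓ⟩) =
      hankelPair c d k ℓ a b := by
  ext i j
  simp only [hankelPair, submatrix_apply, of_apply, Fin.succAbove, Fin.lt_def, Fin.val_castSucc]
  split_ifs <;> simp <;> grind

theorem det_hankelPair_mul_det_hankelPair [CommRing R] (hℓ : ℓ ≤ k) :
    (hankelPair c d (k + 1) (ℓ + 1) a b).det * (hankelPair c d (k + 1) ℓ (a + 1) (b + 1)).det =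
      (hankelPair c d k ℓ (a + 1) (b + 1)).det * (hankelPair c d (k + 2) (ℓ + 1) a b).det +
        (hankelPair c d (k + 1) ℓ a b).det *
          (hankelPair c d (k + 1) (ℓ + 1) (a + 1) (b + 1)).det := by
  have desnanot_jacobi := det_submatrix_succAbove_mul_det
    (hankelPair c d (k + 2) (ℓ + 1) a b) 0 ⟨ℓ, Nat.lt_succ_of_le hℓ⟩
  simp only [Fin.castSucc_zero, Fin.succAbove_zero, Fin.castSucc_mk, hankelPair_submatrix_succ,
    hankelPair_submatrix_castSucc_castSucc,
    hankelPair_submatrix_castSucc_succAbove] at desnanot_jacobi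
  linear_combination -desnanot_jacobi

end Hankel

section Tau

variable {R : Type*} [CommRing R] (c d : ℤ → R)

/-- The tau-function `tau3Z` for sequences in an arbitrary commutative ring, with its determinant
written through `hankelPair`; like `tau3Z` it vanishes outside the range `0 ≤ ℓ ≤ k`. -/
def tau3 (k ℓ α β : ℤ) : R :=
  if k < ℓ ∨ ℓ < 0 ∨ k < 0 then 0
  else (-1) ^ (ℓ.toNat * (ℓ.toNat + 1) / 2) *
    (hankelPair c d k.toNat ℓ.toNat α (α - β)).det

theorem tau3_eq_zero {k ℓ : ℤ} (h : k < ℓ ∨ ℓ < 0) (α β : ℤ) : tau3 c d k ℓ α β = 0 :=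
  if_pos (by omega)

theorem tau3_natCast {k ℓ : ℕ} (h : ℓ ≤ k) (α β : ℤ) :
    tau3 c d k ℓ α β = (-1) ^ (ℓ * (ℓ + 1) / 2) * (hankelPair c d k ℓ α (α - β)).det :=
  if_neg (by omega)

theorem gl3_Qsystem_eq2_general (k ℓ α β : ℤ) :
    tau3 c d k ℓ (α + 1) β * tau3 c d k (ℓ - 1) (α + 2) β =
      tau3 c d (k - 1) (ℓ - 1) (α + 2) β * tau3 c d (k + 1) ℓ (α + 1) β +
        tau3 c d k (ℓ - 1) (α + 1) β * tau3 c d k ℓ (α + 2) β := by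
  rcases le_or_gt ℓ 0 with hℓ | hℓ
  · simp [tau3_eq_zero c d (ℓ := ℓ - 1) (.inr (by omega))]
  rcases lt_or_ge k ℓ with hk | hk
  · simp [tau3_eq_zero c d (.inl hk), tau3_eq_zero c d (k := k - 1) (ℓ := ℓ - 1) (.inl (by omega))]
  obtain ⟨m, rfl⟩ : ∃ m : ℕ, ℓ = (m + 1 : ℕ) := ⟨(ℓ - 1).toNat, by omega⟩
  obtain ⟨n, rfl⟩ : ∃ n : ℕ, k = (n + 1 : ℕ) := ⟨(k - 1).toNat, by omega⟩
  have hmn : m ≤ n := by omega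
  have hankel := det_hankelPair_mul_det_hankelPair c d n m (α + 1) (α + 1 - β) hmn
  rw [show α + 1 + 1 = α + 2 by ring, show α + 1 - β + 1 = α + 2 - β by ring] at hankel
  rw [show ((m + 1 : ℕ) : ℤ) - 1 = m by simp, show ((n + 1 : ℕ) : ℤ) - 1 = n by simp,
    show ((n + 1 : ℕ) : ℤ) + 1 = (n + 2 : ℕ) by push_cast; ring]
  simp (disch := omega) only [tau3_natCast]
  linear_combination (-1) ^ ((m + 1) * (m + 1 + 1) / 2) * (-1) ^ (m * (m + 1) / 2) * hankel

end Tau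

theorem tau3Z_eq_tau3 (c d : ℤ → ℂ) : tau3Z c d = tau3 c d := by
  ext k ℓ α β
  unfold tau3Z tau3 hankelPair
  split_ifs with h
  · rfl
  · push Not at h
    simp [Int.toNat_of_nonneg h.2.1]

theorem gl3_Qsystem_eq2 (c d : ℤ → ℂ) (k ℓ : ℤ) (hk : 0 ≤ k) (hℓ : 0 ≤ ℓ) (α β : ℤ) :
    tau3Z c d k ℓ (α + 1) β * tau3Z c d k (ℓ - 1) (α + 2) β =
      tau3Z c d (k - 1) (ℓ - 1) (α + 2) β * tau3Z c d (k + 1) ℓ (α + 1) β +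
        tau3Z c d k (ℓ - 1) (α + 1) β * tau3Z c d k ℓ (α + 2) β := by
  simpa only [tau3Z_eq_tau3] using gl3_Qsystem_eq2_general c d k ℓ α β
end

section
/- For all integers k, ℓ ≥ 0 and all α, β ∈ ℤ, the tau-functions satisfy equation (4) of the generalized Q-system (a T-system relation): τ_{k−1,ℓ}^{(α,β+1)} τ_{k,ℓ+1}^{(α,β)} = τ_{k−1,ℓ}^{(α,β)} τ_{k,ℓ+1}^{(α,β+1)} + τ_{k−1,ℓ+1}^{(α,β)} τ_{k,ℓ}^{(α,β+1)}. -/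
/-!
Up to a common sign, the three products are values of a three-term Plücker relation. Let `S` be the
columns shared by the six determinants, and let `x`, `y`, `z` be, respectively, the `d`-column just
after the `d`-block, the `c`-column just before the `c`-block, and the `c`-column just after it.
Each determinant of size `k - 1` is `S` enlarged by one of `x`, `y`, `z`, and each determinant of
size `k` is `S` enlarged by two of them. Adding the last basis vector `e` as a further column turns
the smaller determinants into determinants of size `k`, and exchanging `y` in `(e, y, S)` with the
columns of `(x, z, S)` gives the relation.
-/

open Matrix

section Exchange

variable {R : Type*} [CommRing R]

theorem det_mul_det_eq_sum_updateRow {ι : Type*} [Fintype ι] [DecidableEq ι]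
    (A B : Matrix ι ι R) (j : ι) :
    A.det * B.det = ∑ i, (A.updateRow i (B j)).det * (B.updateRow j (A i)).det := by
  have cramer_expansion : A.det • B j = ∑ i, (A.updateRow i (B j)).det • A i := by
    have h := mulVec_cramer Aᵀ (B j)
    rw [det_transpose, mulVec_eq_sum] at h
    simpa only [cramer_transpose_apply, op_smul_eq_smul, transpose_transpose] using h.symm
  calc A.det * B.det = cramer Bᵀ (A.det • B j) j := by
        rw [map_smul, Pi.smul_apply, smul_eq_mul, cramer_transpose_apply, updateRow_eq_self]
    _ = ∑ i, (A.updateRow i (B j)).det * (B.updateRow j (A i)).det := by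
        simp only [cramer_expansion, map_sum, map_smul, Finset.sum_apply, Pi.smul_apply,
          smul_eq_mul]
        simp only [cramer_transpose_apply]

theorem alternatingMap_insertNth_insertNth {M N : Type*} [AddCommGroup M] [Module R M]
    [AddCommGroup N] [Module R N] {n : ℕ} (f : M [⋀^Fin (n + 2)]→ₗ[R] N) (p : Fin (n + 2))
    (q : Fin (n + 1)) (x y : M) (S : Fin n → M) :
    f (p.insertNth x (q.insertNth y S : Fin (n + 1) → M)) =
      (-1) ^ (p + q : ℕ) • f (vecCons x (vecCons y S)) := by
  rw [f.map_insertNth, pow_add, mul_smul]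
  exact congrArg _ ((f.curryLeft x).map_insertNth q y S)

end Exchange

section LeadingMinor

variable {R : Type*} [CommRing R]

/-- The determinant of the matrix whose rows are the first `N` entries of `N` given infinite
sequences. Keeping the sequences infinite lets minors of different sizes share their rows. -/
def leadingMinor (N : ℕ) : (ℕ → R) [⋀^Fin N]→ₗ[R] R :=
  detRowAlternating.compLinearMap (LinearMap.funLeft R R ((↑) : Fin N → ℕ))

theorem leadingMinor_apply (N : ℕ) (v : Fin N → ℕ → R) :
    leadingMinor N v = det (of fun i j : Fin N => v i j) := rfl

theorem leadingMinor_update (N : ℕ) (v : Fin N → ℕ → R) (i : Fin N) (w : ℕ → R) :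
    leadingMinor N (Function.update v i w) =
      ((of fun i j : Fin N => v i j).updateRow i fun j => w j).det := by
  rw [leadingMinor_apply]
  congr 1
  ext a b
  rw [of_apply, updateRow_apply, Function.update_apply]
  split_ifs <;> rfl

theorem leadingMinor_mul_leadingMinor_eq_sum_update {N : ℕ} (v w : Fin N → ℕ → R) (j : Fin N) :
    leadingMinor N v * leadingMinor N w =
      ∑ i, leadingMinor N (Function.update v i (w j)) *
        leadingMinor N (Function.update w j (v i)) := by
  simp only [leadingMinor_update]
  exact det_mul_det_eq_sum_updateRow _ _ j

theorem leadingMinor_single_cons (n : ℕ) (v : Fin n → ℕ → R) :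
    leadingMinor (n + 1) (vecCons (Pi.single n 1) v) = (-1) ^ n * leadingMinor n v := by
  rw [leadingMinor_apply, det_succ_row_zero, Finset.sum_eq_single (Fin.last n)]
  · simp only [of_apply, cons_val_zero, Fin.val_last, Pi.single_eq_same, mul_one,
      Fin.succAbove_last]
    rfl
  · intro j _ hj
    have hjn : (j : ℕ) ≠ n := fun h => hj (Fin.ext h)
    simp [hjn]
  · simp

theorem leadingMinor_plucker {n : ℕ} (S : Fin n → ℕ → R) (e x y z : ℕ → R) :
    leadingMinor (n + 2) (vecCons e (vecCons y S)) *
        leadingMinor (n + 2) (vecCons x (vecCons z S)) =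
      leadingMinor (n + 2) (vecCons e (vecCons z S)) *
          leadingMinor (n + 2) (vecCons x (vecCons y S)) +
        leadingMinor (n + 2) (vecCons e (vecCons x S)) *
          leadingMinor (n + 2) (vecCons y (vecCons z S)) := by
  have update_zero (u v w : ℕ → R) : Function.update (vecCons u (vecCons v S)) 0 w =
      vecCons w (vecCons v S) := Fin.update_cons_zero ..
  have update_one (u v w : ℕ → R) : Function.update (vecCons u (vecCons v S)) (Fin.succ 0) w =
      vecCons u (vecCons w S) := by
    rw [vecCons, ← Fin.cons_update, vecCons, Fin.update_cons_zero]
    rfl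
  have repeated_row (i : Fin n) : leadingMinor (n + 2) (vecCons e (vecCons (S i) S)) = 0 :=
    (leadingMinor (n + 2)).map_eq_zero_of_eq _ (i := 1) (j := i.succ.succ) rfl
      (by simp [Fin.ext_iff])
  have exchange := leadingMinor_mul_leadingMinor_eq_sum_update
    (vecCons x (vecCons z S)) (vecCons e (vecCons y S)) (Fin.succ 0)
  simp only [Fin.sum_univ_succ, update_zero, update_one, cons_val_succ, cons_val_zero,
    repeated_row, mul_zero, Finset.sum_const_zero, add_zero] at exchange
  linear_combination exchange

theorem leadingMinor_succ_plucker {n : ℕ} (S : Fin n → ℕ → R) (x y z : ℕ → R) :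
    leadingMinor (n + 1) (vecCons y S) * leadingMinor (n + 2) (vecCons x (vecCons z S)) =
      leadingMinor (n + 1) (vecCons z S) * leadingMinor (n + 2) (vecCons x (vecCons y S)) +
        leadingMinor (n + 1) (vecCons x S) * leadingMinor (n + 2) (vecCons y (vecCons z S)) := by
  have plucker := leadingMinor_plucker S (Pi.single (n + 1) 1) x y z
  simp only [leadingMinor_single_cons, mul_assoc, ← mul_add] at plucker
  exact (isUnit_one.neg.pow (n + 1)).mul_left_cancel plucker

end LeadingMinor

section Splice

variable {M : Type*}

/-- The family of length `N` formed by the first `L` terms of `a` followed by the initial terms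
of `b`. -/
def splice (a b : ℕ → M) (L N : ℕ) : Fin N → M :=
  fun j => if (j : ℕ) < L then a j else b (j - L)

theorem splice_self_congr (a b b' : ℕ → M) (L : ℕ) : splice a b L L = splice a b' L L := by
  funext j
  simp only [splice, j.is_lt, if_true]

theorem splice_succ_succ (a b : ℕ → M) {L N : ℕ} (h : L ≤ N) :
    splice a b (L + 1) (N + 1) =
      (⟨L, by omega⟩ : Fin (N + 1)).insertNth (a L) (splice a b L N) := by
  refine Fin.eq_insertNth_iff.2 ⟨by simp [splice], funext fun j => ?_⟩
  simp only [Fin.removeNth, splice, Fin.succAbove, Fin.lt_def]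
  grind

theorem splice_succ (a b : ℕ → M) {L N : ℕ} (h : L ≤ N) :
    splice a b L (N + 1) =
      (⟨L, by omega⟩ : Fin (N + 1)).insertNth (b 0) (splice a (fun m => b (m + 1)) L N) := by
  refine Fin.eq_insertNth_iff.2 ⟨by simp [splice], funext fun j => ?_⟩
  simp only [Fin.removeNth, splice, Fin.succAbove, Fin.lt_def]
  grind

theorem splice_succ_last (a b : ℕ → M) {L N : ℕ} (h : L ≤ N) :
    splice a b L (N + 1) = (Fin.last N).insertNth (b (N - L)) (splice a b L N) := by
  refine Fin.eq_insertNth_iff.2 ⟨by simp [splice, h.not_gt], funext fun j => ?_⟩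
  simp only [Fin.removeNth_last, Fin.init, splice, Fin.val_castSucc]

theorem leadingMinor_splice_relation {R : Type*} [CommRing R] (a b : ℕ → ℕ → R) {L n : ℕ}
    (h : L ≤ n) :
    leadingMinor (n + 1) (splice a b L (n + 1)) *
        leadingMinor (n + 2) (splice a (fun m => b (m + 1)) (L + 1) (n + 2)) =
      leadingMinor (n + 1) (splice a (fun m => b (m + 1)) L (n + 1)) *
          leadingMinor (n + 2) (splice a b (L + 1) (n + 2)) +
        leadingMinor (n + 1) (splice a (fun m => b (m + 1)) (L + 1) (n + 1)) *
          leadingMinor (n + 2) (splice a b L (n + 2)) := by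
  have plucker := leadingMinor_succ_plucker (splice a (fun m => b (m + 1)) L n)
    (a L) (b 0) (b (n - L + 1))
  rw [splice_succ_succ a _ (h.trans n.le_succ), splice_succ_succ a b (h.trans n.le_succ),
    splice_succ_succ a _ h, splice_succ a b (h.trans n.le_succ), splice_succ a b h,
    splice_succ_last a _ h]
  simp only [alternatingMap_insertNth_insertNth]
  simp only [AlternatingMap.map_insertNth, Fin.val_last, zsmul_eq_mul, Int.cast_pow, Int.cast_neg,
    Int.cast_one]
  linear_combination (-1) ^ (L + L + n) * plucker

end Splice

section Tau

variable {R : Type*}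

/-- The rows of the infinite Hankel matrix of the shifted sequence `s (α + ·)`. -/
def hankelRow (s : ℤ → R) (α : ℤ) (j i : ℕ) : R := s (α + i + j)

theorem hankelRow_sub_one_succ (s : ℤ → R) (α : ℤ) :
    (fun j => hankelRow s (α - 1) (j + 1)) = hankelRow s α := by
  funext j i
  unfold hankelRow
  congr 1
  push_cast
  ring

variable [CommRing R]

/-- The tau-function `tau3Z` for sequences with values in a commutative ring. -/
def tauGL3 (c d : ℤ → R) (k ℓ α β : ℤ) : R :=
  if k < ℓ ∨ ℓ < 0 ∨ k < 0 then 0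
  else
    (-1) ^ (ℓ.toNat * (ℓ.toNat + 1) / 2) *
      det (of fun i j : Fin k.toNat =>
        if ((j : ℕ) : ℤ) < ℓ then d (α + (i : ℕ) + (j : ℕ))
        else c (α - β + (i : ℕ) + (j : ℕ) - ℓ))

theorem tauGL3_of_lt (c d : ℤ → R) {k ℓ : ℤ} (h : k < ℓ) (α β : ℤ) : tauGL3 c d k ℓ α β = 0 :=
  if_pos (Or.inl h)

theorem tauGL3_eq_leadingMinor (c d : ℤ → R) {k ℓ : ℕ} (h : ℓ ≤ k) (α β : ℤ) :
    tauGL3 c d k ℓ α β = (-1) ^ (ℓ * (ℓ + 1) / 2) *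
      leadingMinor k (splice (hankelRow d α) (hankelRow c (α - β)) ℓ k) := by
  rw [tauGL3, if_neg (by omega), leadingMinor_apply, ← det_transpose]
  simp only [Nat.cast_lt, Int.toNat_natCast]
  congr 2
  ext i j
  simp only [transpose_apply, of_apply, splice]
  split_ifs with hj
  · rfl
  · congr 1
    push_cast [not_lt.1 hj]
    ring

theorem tauGL3_self_congr (c d : ℤ → R) (k : ℕ) (α β β' : ℤ) :
    tauGL3 c d k k α β = tauGL3 c d k k α β' := by
  rw [tauGL3_eq_leadingMinor c d le_rfl, tauGL3_eq_leadingMinor c d le_rfl,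
    splice_self_congr _ _ (hankelRow c (α - β'))]

theorem tauGL3_relation_of_le (c d : ℤ → R) {n ℓ : ℕ} (h : ℓ ≤ n) (α β : ℤ) :
    tauGL3 c d ↑(n + 1) ℓ α (β + 1) * tauGL3 c d ↑(n + 2) ↑(ℓ + 1) α β =
      tauGL3 c d ↑(n + 1) ℓ α β * tauGL3 c d ↑(n + 2) ↑(ℓ + 1) α (β + 1) +
        tauGL3 c d ↑(n + 1) ↑(ℓ + 1) α β * tauGL3 c d ↑(n + 2) ℓ α (β + 1) := by
  have relation := leadingMinor_splice_relation (hankelRow d α) (hankelRow c (α - β - 1)) h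
  simp only [hankelRow_sub_one_succ] at relation
  repeat rw [tauGL3_eq_leadingMinor c d (by omega)]
  rw [← sub_sub]
  linear_combination
    (-1) ^ (ℓ * (ℓ + 1) / 2) * (-1) ^ ((ℓ + 1) * (ℓ + 1 + 1) / 2) * relation

theorem gl3_Qsystem_eq4_general (c d : ℤ → R) (k ℓ : ℕ) (α β : ℤ) :
    tauGL3 c d (k - 1) ℓ α (β + 1) * tauGL3 c d k (ℓ + 1) α β =
      tauGL3 c d (k - 1) ℓ α β * tauGL3 c d k (ℓ + 1) α (β + 1) +
        tauGL3 c d (k - 1) (ℓ + 1) α β * tauGL3 c d k ℓ α (β + 1) := by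
  rcases lt_trichotomy k (ℓ + 1) with hlt | rfl | hgt
  · simp only [tauGL3_of_lt c d (show (k : ℤ) - 1 < ℓ by omega),
      tauGL3_of_lt c d (show (k : ℤ) - 1 < ℓ + 1 by omega), zero_mul, add_zero]
  · have hk : ((ℓ + 1 : ℕ) : ℤ) - 1 = ℓ := by push_cast; ring
    rw [hk, ← Nat.cast_succ, tauGL3_self_congr c d ℓ α (β + 1) β,
      tauGL3_self_congr c d ℓ.succ α β (β + 1),
      tauGL3_of_lt c d (show (ℓ : ℤ) < ℓ.succ by omega), zero_mul, add_zero]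
  · obtain ⟨n, rfl⟩ : ∃ n, k = n + 2 := ⟨k - 2, by omega⟩
    have hk : ((n + 2 : ℕ) : ℤ) - 1 = (n + 1 : ℕ) := by push_cast; ring
    rw [hk, ← Nat.cast_succ]
    exact tauGL3_relation_of_le c d (by omega) α β

end Tau

theorem gl3_Qsystem_eq4 (c d : ℤ → ℂ) (k ℓ : ℤ) (hk : 0 ≤ k) (hℓ : 0 ≤ ℓ) (α β : ℤ) :
    tau3Z c d (k - 1) ℓ α (β + 1) * tau3Z c d k (ℓ + 1) α β =
      tau3Z c d (k - 1) ℓ α β * tau3Z c d k (ℓ + 1) α (β + 1) +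
        tau3Z c d (k - 1) (ℓ + 1) α β * tau3Z c d k ℓ α (β + 1) := by
  lift k to ℕ using hk
  lift ℓ to ℕ using hℓ
  exact gl3_Qsystem_eq4_general c d k ℓ α β
end
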